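/- Fix ω0 ∈ ℝ, σ0² > 0, σq² > 0, and suppose there is a single source quality, with signal density φ(s; ω, σq²). For r ∈ (0,∞), define D_r(ω) := ∫_{ω0−r}^{ω0+r} φ(t|ω; σq²) dt (the probability of the window under the signal density), the censored posterior mean a*(s,r) := (∫ ω·φ(s; ω, σq²)·φ(ω; ω0, σ0²)/D_r(ω) dω) / (∫ φ(s; ω, σq²)·φ(ω; ω0, σ0²)/D_r(ω) dω), and the expected quadratic loss L(r) := ∫ ( ∫_{ω0−r}^{ω0+r} (ω − a*(s,r))²·(φ(s; ω, σq²)/D_r(ω)) ds )·φ(ω; ω0, σ0²) dω. Then for every finite r > 0, L(r) ≥ σ0²·σq²/(σ0² + σq²), i.e., no finite censoring radius yields a strictly smaller expected loss than uncensored sampling, whose expected loss equals σ0²·σq²/(σ0² + σq²). -/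

import Mathlib

open MeasureTheory Real Filter

/-- The Gaussian density with mean `m` and variance `v`. -/
noncomputable def gauss (x m v : ℝ) : ℝ :=
  (Real.sqrt (2 * Real.pi * v))⁻¹ * Real.exp (-(x - m) ^ 2 / (2 * v))

/-- `D_r(ω)`: the probability of the window `[ω0−r, ω0+r]` under the signal density. -/
noncomputable def winProb (ω0 vq r ω : ℝ) : ℝ :=
  ∫ t in Set.Icc (ω0 - r) (ω0 + r), gauss t ω vq

/-- The censored posterior-mean action `a*(s,r)` with a single source quality. -/
noncomputable def aCens (ω0 v0 vq r s : ℝ) : ℝ :=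
  (∫ ω : ℝ, ω * (gauss s ω vq * gauss ω ω0 v0 / winProb ω0 vq r ω)) /
    (∫ ω : ℝ, gauss s ω vq * gauss ω ω0 v0 / winProb ω0 vq r ω)

/-- `L(r)`: the expected quadratic loss of censoring to radius `r` with a single quality. -/
noncomputable def lossCens (ω0 v0 vq r : ℝ) : ℝ :=
  ∫ ω : ℝ,
    (∫ s in Set.Icc (ω0 - r) (ω0 + r),
        (ω - aCens ω0 v0 vq r s) ^ 2 * (gauss s ω vq / winProb ω0 vq r ω)) *
      gauss ω ω0 v0


lemma gauss_pos (x m v : ℝ) (hv : 0 < v) : 0 < gauss x m v := by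
  unfold gauss; positivity

lemma gauss_cont2 (v : ℝ) : Continuous (fun z : ℝ × ℝ => gauss z.1 z.2 v) := by
  unfold gauss; fun_prop

lemma gauss_hasDeriv_left (x m v : ℝ) (hv : 0 < v) :
    HasDerivAt (fun t => gauss t m v) (-((x - m) / v) * gauss x m v) x := by
  unfold gauss
  have h : HasDerivAt (fun t : ℝ => -(t - m) ^ 2 / (2 * v)) (-((x - m) / v)) x := by
    have := ((((hasDerivAt_id x).sub_const m).pow 2).neg).div_const (2 * v)
    refine this.congr_deriv ?_
    simp; field_simp
  refine (h.exp.const_mul _).congr_deriv ?_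
  ring

lemma gauss_hasDeriv_right (x m v : ℝ) (hv : 0 < v) :
    HasDerivAt (fun t => gauss x t v) (((x - m) / v) * gauss x m v) m := by
  have h := gauss_hasDeriv_left m x v hv
  have e : ∀ a b : ℝ, gauss a b v = gauss b a v := by
    intro a b; unfold gauss; rw [← neg_sub b a, neg_sq]
  have e2 : (fun t => gauss x t v) = fun t => gauss t x v := funext fun t => e _ _
  rw [e2, e x m]
  refine h.congr_deriv ?_
  ring

lemma winProb_eq (ω0 vq r ω : ℝ) (hr : 0 < r) :
    winProb ω0 vq r ω = (∫ y in (0:ℝ)..(ω0 + r - ω), gauss y 0 vq)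
      - ∫ y in (0:ℝ)..(ω0 - r - ω), gauss y 0 vq := by
  have hc : Continuous (fun y => gauss y 0 vq) :=
    (gauss_cont2 vq).comp (by fun_prop : Continuous fun y : ℝ => (y, (0:ℝ)))
  rw [intervalIntegral.integral_interval_sub_left (hc.intervalIntegrable _ _)
    (hc.intervalIntegrable _ _)]
  unfold winProb
  rw [integral_Icc_eq_integral_Ioc, ← intervalIntegral.integral_of_le (by linarith)]
  rw [← intervalIntegral.integral_comp_sub_right (fun y => gauss y 0 vq) ω]
  simp [gauss]

lemma winProb_hasDeriv (ω0 vq r ω : ℝ) (hr : 0 < r) :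
    HasDerivAt (winProb ω0 vq r) (gauss (ω0 - r) ω vq - gauss (ω0 + r) ω vq) ω := by
  have hc : Continuous (fun y => gauss y 0 vq) :=
    (gauss_cont2 vq).comp (by fun_prop : Continuous fun y : ℝ => (y, (0:ℝ)))
  have e : winProb ω0 vq r = fun ω => (∫ y in (0:ℝ)..(ω0 + r - ω), gauss y 0 vq)
      - ∫ y in (0:ℝ)..(ω0 - r - ω), gauss y 0 vq := funext fun ω => winProb_eq _ _ _ _ hr
  rw [e]
  have h : ∀ c : ℝ, HasDerivAt (fun ω => ∫ y in (0:ℝ)..(c - ω), gauss y 0 vq)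
      (- gauss c ω vq) ω := by
    intro c
    have h1 := (hc.integral_hasStrictDerivAt 0 (c - ω)).hasDerivAt
    have h2 : HasDerivAt (fun ω : ℝ => c - ω) (-1) ω := by
      simpa using (hasDerivAt_id ω).const_sub c
    refine (h1.comp ω h2).congr_deriv ?_
    simp [gauss]
  refine ((h _).sub (h _)).congr_deriv ?_
  ring

lemma winProb_cont (ω0 vq r : ℝ) (hr : 0 < r) : Continuous (winProb ω0 vq r) :=
  continuous_iff_continuousAt.2 fun ω => (winProb_hasDeriv ω0 vq r ω hr).continuousAt

lemma gauss_intOn (ω0 vq r ω : ℝ) :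
    IntegrableOn (fun t => gauss t ω vq) (Set.Icc (ω0 - r) (ω0 + r)) :=
  ((gauss_cont2 vq).comp (by fun_prop : Continuous fun y : ℝ => (y, ω))).continuousOn.integrableOn_Icc

lemma window_moment (ω0 vq r ω : ℝ) (hr : 0 < r) (hvq : 0 < vq) :
    ∫ t in Set.Icc (ω0 - r) (ω0 + r), (t - ω) * gauss t ω vq
      = vq * (gauss (ω0 - r) ω vq - gauss (ω0 + r) ω vq) := by
  rw [integral_Icc_eq_integral_Ioc, ← intervalIntegral.integral_of_le (by linarith)]
  have hc : Continuous (fun t => (t - ω) * gauss t ω vq) := by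
    have : Continuous (fun y => gauss y ω vq) :=
      (gauss_cont2 vq).comp (by fun_prop : Continuous fun y : ℝ => (y, ω))
    fun_prop
  rw [intervalIntegral.integral_eq_sub_of_hasDerivAt (f := fun t => -vq * gauss t ω vq)
    (fun x _ => ?_) (hc.intervalIntegrable _ _)]
  · ring
  · refine ((gauss_hasDeriv_left x ω vq hvq).const_mul (-vq)).congr_deriv ?_
    field_simp

lemma window_bounds (ω0 vq r ω : ℝ) (hr : 0 < r) (hvq : 0 < vq) :
    (ω0 - r - ω) * winProb ω0 vq r ω ≤ vq * (gauss (ω0 - r) ω vq - gauss (ω0 + r) ω vq) ∧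
    vq * (gauss (ω0 - r) ω vq - gauss (ω0 + r) ω vq) ≤ (ω0 + r - ω) * winProb ω0 vq r ω := by
  have hc : Continuous (fun y => gauss y ω vq) :=
      (gauss_cont2 vq).comp (by fun_prop : Continuous fun y : ℝ => (y, ω))
  rw [← window_moment ω0 vq r ω hr hvq]
  unfold winProb
  rw [← integral_const_mul, ← integral_const_mul]
  have hi : ∀ g : ℝ → ℝ, Continuous g → IntegrableOn g (Set.Icc (ω0 - r) (ω0 + r)) :=
    fun g hg => hg.continuousOn.integrableOn_Icc
  constructor
  · refine setIntegral_mono_on (hi _ (by fun_prop)) (hi _ (by fun_prop)) measurableSet_Icc ?_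
    intro t ht
    exact mul_le_mul_of_nonneg_right (by linarith [ht.1]) (gauss_pos _ _ _ hvq).le
  · refine setIntegral_mono_on (hi _ (by fun_prop)) (hi _ (by fun_prop)) measurableSet_Icc ?_
    intro t ht
    exact mul_le_mul_of_nonneg_right (by linarith [ht.2]) (gauss_pos _ _ _ hvq).le

/-- Lower bound on the window probability in terms of the density at a point of the window. -/
lemma winProb_lower (ω0 vq r ω s : ℝ) (hr : 0 < r) (hvq : 0 < vq)
    (hs : s ∈ Set.Icc (ω0 - r) (ω0 + r)) :
    2 * r * (gauss s ω vq * exp (-((2 * r ^ 2 + 2 * r * |ω - ω0|) / vq))) ≤ winProb ω0 vq r ω := by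
  unfold winProb
  have h1 : ∫ t in Set.Icc (ω0 - r) (ω0 + r),
      (gauss s ω vq * exp (-((2 * r ^ 2 + 2 * r * |ω - ω0|) / vq)))
      = 2 * r * (gauss s ω vq * exp (-((2 * r ^ 2 + 2 * r * |ω - ω0|) / vq))) := by
    rw [setIntegral_const, smul_eq_mul, Real.volume_real_Icc_of_le (by linarith)]
    ring
  rw [← h1]
  refine setIntegral_mono_on (continuous_const.continuousOn.integrableOn_Icc)
    (gauss_intOn ω0 vq r ω) measurableSet_Icc ?_
  intro t ht
  unfold gauss
  rw [mul_assoc, ← exp_add]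
  refine mul_le_mul_of_nonneg_left (exp_le_exp.2 ?_) (by positivity)
  have e1 : -(s - ω) ^ 2 / (2 * vq) + -((2 * r ^ 2 + 2 * r * |ω - ω0|) / vq)
    = (-(s - ω) ^ 2 - 2 * (2 * r ^ 2 + 2 * r * |ω - ω0|)) / (2 * vq) := by field_simp; ring
  rw [e1]
  refine div_le_div_of_nonneg_right ?_ (by positivity)
  obtain ⟨a1, a2⟩ := hs
  obtain ⟨b1, b2⟩ := ht
  have hx1 := le_abs_self (ω - ω0)
  have hx2 := neg_abs_le (ω - ω0)
  have hA : |t - s| ≤ 2 * r := abs_le.2 ⟨by linarith, by linarith⟩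
  have hB : |t + s - 2 * ω| ≤ 2 * r + 2 * |ω - ω0| := abs_le.2 ⟨by linarith, by linarith⟩
  have := mul_le_mul hA hB (abs_nonneg _) (by linarith)
  rw [← abs_mul] at this
  have := le_trans (le_abs_self _) this
  nlinarith

lemma winProb_pos (ω0 vq r ω : ℝ) (hr : 0 < r) (hvq : 0 < vq) : 0 < winProb ω0 vq r ω := by
  refine lt_of_lt_of_le ?_ (winProb_lower ω0 vq r ω ω0 hr hvq ⟨by linarith, by linarith⟩)
  have := gauss_pos ω0 ω vq hvq
  positivity

/-- Minus the logarithmic derivative of the window probability. -/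
noncomputable def kf (ω0 vq r ω : ℝ) : ℝ :=
  (gauss (ω0 + r) ω vq - gauss (ω0 - r) ω vq) / winProb ω0 vq r ω

lemma kf_mono (ω0 vq r : ℝ) (hr : 0 < r) (hvq : 0 < vq) : Monotone (kf ω0 vq r) := by
  have hd : ∀ ω, HasDerivAt (kf ω0 vq r) _ ω := fun ω =>
    ((gauss_hasDeriv_right (ω0 + r) ω vq hvq).sub (gauss_hasDeriv_right (ω0 - r) ω vq hvq)).div
      (winProb_hasDeriv ω0 vq r ω hr) (winProb_pos ω0 vq r ω hr hvq).ne'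
  refine monotone_of_deriv_nonneg (fun ω => (hd ω).differentiableAt) fun ω => ?_
  rw [(hd ω).deriv]
  have hb := window_bounds ω0 vq r ω hr hvq
  have hu := gauss_pos (ω0 + r) ω vq hvq
  have hl := gauss_pos (ω0 - r) ω vq hvq
  simp only [Pi.sub_apply]
  generalize gauss (ω0 + r) ω vq = gu at *
  generalize gauss (ω0 - r) ω vq = gl at *
  generalize winProb ω0 vq r ω = D at *
  refine div_nonneg ?_ (sq_nonneg _)
  have e : ((ω0 + r - ω) / vq * gu - (ω0 - r - ω) / vq * gl) * D - (gu - gl) * (gl - gu)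
    = (gu * ((ω0 + r - ω) * D - vq * (gl - gu)) + gl * (vq * (gl - gu) - (ω0 - r - ω) * D)) / vq := by
    field_simp; ring
  rw [e]
  have h1 := mul_nonneg hu.le (sub_nonneg.2 hb.2)
  have h2 := mul_nonneg hl.le (sub_nonneg.2 hb.1)
  positivity

lemma abs_mul_of_pos' (a b : ℝ) (hb : 0 < b) : |a * b| = |a| * b := by
  rw [abs_mul, abs_of_pos hb]

lemma kf_abs (ω0 vq r ω : ℝ) (hr : 0 < r) (hvq : 0 < vq) :
    |kf ω0 vq r ω| ≤ (r + |ω - ω0|) / vq := by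
  have hb := window_bounds ω0 vq r ω hr hvq
  have hD := winProb_pos ω0 vq r ω hr hvq
  have hx1 := le_abs_self (ω - ω0)
  have hx2 := neg_abs_le (ω - ω0)
  unfold kf
  generalize gauss (ω0 + r) ω vq = gu at *
  generalize gauss (ω0 - r) ω vq = gl at *
  generalize winProb ω0 vq r ω = D at *
  rw [abs_div, abs_of_pos hD, div_le_div_iff₀ hD hvq, ← abs_mul_of_pos' _ _ hvq]
  refine abs_le.2 ⟨?_, ?_⟩ <;> nlinarith

/-- Joint density of signal and state under censoring. -/
noncomputable def fj (ω0 v0 vq r s ω : ℝ) : ℝ :=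
  gauss s ω vq * gauss ω ω0 v0 / winProb ω0 vq r ω

lemma fj_pos (ω0 v0 vq r s ω : ℝ) (hr : 0 < r) (hvq : 0 < vq) (hv0 : 0 < v0) :
    0 < fj ω0 v0 vq r s ω :=
  div_pos (mul_pos (gauss_pos _ _ _ hvq) (gauss_pos _ _ _ hv0)) (winProb_pos _ _ _ _ hr hvq)

lemma fj_cont2 (ω0 v0 vq r : ℝ) (hr : 0 < r) (hvq : 0 < vq) :
    Continuous (fun z : ℝ × ℝ => fj ω0 v0 vq r z.2 z.1) := by
  unfold fj
  refine Continuous.div (Continuous.mul ?_ ?_) ?_ fun z => (winProb_pos _ _ _ _ hr hvq).ne'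
  · exact (gauss_cont2 vq).comp (by fun_prop : Continuous fun y : ℝ × ℝ => (y.2, y.1))
  · exact (gauss_cont2 v0).comp (by fun_prop : Continuous fun y : ℝ × ℝ => (y.1, ω0))
  · exact (winProb_cont _ _ _ hr).comp continuous_fst

lemma fj_bound (ω0 v0 vq r : ℝ) (hr : 0 < r) (hvq : 0 < vq) (hv0 : 0 < v0) :
    ∃ C : ℝ, 0 < C ∧ ∀ s ∈ Set.Icc (ω0 - r) (ω0 + r), ∀ ω,
      fj ω0 v0 vq r s ω ≤ C * exp (-(4 * v0)⁻¹ * (ω - ω0) ^ 2) := by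
  refine ⟨(2 * r)⁻¹ * (Real.sqrt (2 * Real.pi * v0))⁻¹ *
    exp (2 * r ^ 2 / vq + 4 * r ^ 2 * v0 / vq ^ 2), by positivity, ?_⟩
  intro s hs ω
  have hl := winProb_lower ω0 vq r ω s hr hvq hs
  have hD := winProb_pos ω0 vq r ω hr hvq
  have h1 : gauss s ω vq / winProb ω0 vq r ω ≤
      (2 * r)⁻¹ * exp ((2 * r ^ 2 + 2 * r * |ω - ω0|) / vq) := by
    rw [div_le_iff₀ hD]
    refine le_trans (le_of_eq ?_) (mul_le_mul_of_nonneg_left hl (by positivity))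
    rw [exp_neg]
    field_simp
  have h2 : fj ω0 v0 vq r s ω = gauss s ω vq / winProb ω0 vq r ω * gauss ω ω0 v0 := by
    unfold fj; ring
  rw [h2]
  refine (mul_le_mul_of_nonneg_right h1 (gauss_pos _ _ _ hv0).le).trans ?_
  unfold gauss
  have e : (2 * r)⁻¹ * exp ((2 * r ^ 2 + 2 * r * |ω - ω0|) / vq) *
      ((√(2 * π * v0))⁻¹ * exp (-(ω - ω0) ^ 2 / (2 * v0)))
      = (2 * r)⁻¹ * (√(2 * π * v0))⁻¹ * exp ((2 * r ^ 2 + 2 * r * |ω - ω0|) / vq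
        + -(ω - ω0) ^ 2 / (2 * v0)) := by rw [exp_add]; ring
  rw [e, mul_assoc _ (exp _) (exp _), ← exp_add]
  refine mul_le_mul_of_nonneg_left (exp_le_exp.2 ?_) (by positivity)
  rw [← sq_abs (ω - ω0)]
  generalize |ω - ω0| = x
  have h3 : 0 ≤ (x - 4 * r * v0 / vq) ^ 2 / (4 * v0) := by positivity
  have h4 : (2 * r ^ 2 / vq + 4 * r ^ 2 * v0 / vq ^ 2 + -(4 * v0)⁻¹ * x ^ 2)
     - ((2 * r ^ 2 + 2 * r * x) / vq + -x ^ 2 / (2 * v0)) = (x - 4 * r * v0 / vq) ^ 2 / (4 * v0) := by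
    field_simp; ring
  linarith

lemma base_int (ω0 v0 : ℝ) (hv0 : 0 < v0) :
    Integrable (fun ω : ℝ => (1 + (ω - ω0) ^ 2) * exp (-(4 * v0)⁻¹ * (ω - ω0) ^ 2)) := by
  have hb : 0 < (4 * v0)⁻¹ := by positivity
  have h1 := integrable_exp_neg_mul_sq hb
  have h2 := integrable_rpow_mul_exp_neg_mul_sq hb (s := 2) (by norm_num)
  have h3 := (h1.add h2).comp_sub_right ω0
  refine h3.congr (Eventually.of_forall fun ω => ?_)
  simp
  ring

lemma fj_cont1 (ω0 v0 vq r : ℝ) (hr : 0 < r) (hvq : 0 < vq) (s : ℝ) :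
    Continuous (fun ω => fj ω0 v0 vq r s ω) := by
  have h := fj_cont2 ω0 v0 vq r hr hvq
  have h2 : Continuous fun y : ℝ => (y, s) := by fun_prop
  have h3 := Continuous.comp h h2
  simp only [Function.comp_def] at h3
  exact h3

/-- Domination lemma: anything of quadratic growth is integrable against the joint density. -/
lemma quad_int (ω0 v0 vq r : ℝ) (hr : 0 < r) (hvq : 0 < vq) (hv0 : 0 < v0) (s : ℝ)
    (hs : s ∈ Set.Icc (ω0 - r) (ω0 + r)) (g : ℝ → ℝ) (hg : Continuous g) (K : ℝ)
    (hK : ∀ ω, |g ω| ≤ K * (1 + (ω - ω0) ^ 2)) :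
    Integrable (fun ω => g ω * fj ω0 v0 vq r s ω) := by
  obtain ⟨C, hC, hb⟩ := fj_bound ω0 v0 vq r hr hvq hv0
  have hfc : Continuous (fun ω => fj ω0 v0 vq r s ω) := fj_cont1 ω0 v0 vq r hr hvq s
  have hm : AEStronglyMeasurable (fun ω => g ω * fj ω0 v0 vq r s ω) volume :=
    (hg.mul hfc).aestronglyMeasurable
  refine Integrable.mono' ((base_int ω0 v0 hv0).const_mul (K * C)) hm
    (Eventually.of_forall fun ω => ?_)
  have hf := fj_pos ω0 v0 vq r s ω hr hvq hv0
  have hk0 : 0 ≤ K * (1 + (ω - ω0) ^ 2) := (abs_nonneg _).trans (hK ω)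
  have h := mul_le_mul (hK ω) (hb s hs ω) hf.le hk0
  rw [Real.norm_eq_abs, abs_mul_of_pos' _ _ hf]
  refine h.trans (le_of_eq ?_)
  ring

lemma fj_hasDeriv (ω0 v0 vq r s ω : ℝ) (hr : 0 < r) (hvq : 0 < vq) (hv0 : 0 < v0) :
    HasDerivAt (fj ω0 v0 vq r s)
      (((s - ω) / vq - (ω - ω0) / v0 + kf ω0 vq r ω) * fj ω0 v0 vq r s ω) ω := by
  have hD := winProb_pos ω0 vq r ω hr hvq
  refine (((gauss_hasDeriv_right s ω vq hvq).mul (gauss_hasDeriv_left ω ω0 v0 hv0)).div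
    (winProb_hasDeriv ω0 vq r ω hr) hD.ne').congr_deriv ?_
  unfold fj kf
  simp only [Pi.mul_apply]
  field_simp
  ring

lemma kf_cont (ω0 vq r : ℝ) (hr : 0 < r) (hvq : 0 < vq) : Continuous (kf ω0 vq r) := by
  unfold kf
  refine Continuous.div (Continuous.sub ?_ ?_) (winProb_cont _ _ _ hr)
    fun z => (winProb_pos _ _ _ _ hr hvq).ne'
  · exact (gauss_cont2 vq).comp (by fun_prop : Continuous fun y : ℝ => (ω0 + r, y))
  · exact (gauss_cont2 vq).comp (by fun_prop : Continuous fun y : ℝ => (ω0 - r, y))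

lemma lin_bd (ω0 ω c : ℝ) : |ω - c| ≤ (1 + |ω0 - c|) * (1 + (ω - ω0) ^ 2) := by
  have h1 : |ω - c| ≤ |ω - ω0| + |ω0 - c| := abs_sub_le _ _ _
  have h2 := abs_nonneg (ω0 - c)
  have h3 := sq_abs (ω - ω0)
  nlinarith [sq_nonneg (|ω - ω0| - 1), mul_nonneg h2 (sq_nonneg (ω - ω0))]

lemma lin_bd' (ω0 ω c : ℝ) : |ω - c| ≤ (1 + |ω0 - c|) * (1 + |ω - ω0|) := by
  have h1 : |ω - c| ≤ |ω - ω0| + |ω0 - c| := abs_sub_le _ _ _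
  have h2 := abs_nonneg (ω0 - c)
  nlinarith [mul_nonneg h2 (abs_nonneg (ω - ω0))]

lemma prod_bd (x A B a b : ℝ) (hA0 : 0 ≤ A) (ha : |a| ≤ A * (1 + |x|)) (hb : |b| ≤ B * (1 + |x|))
    (hB0 : 0 ≤ B) :
    |a * b| ≤ (2 * A * B) * (1 + x ^ 2) := by
  rw [abs_mul]
  have h := mul_le_mul ha hb (abs_nonneg _) (by positivity)
  have h2 : (1 + |x|) ^ 2 ≤ 2 * (1 + x ^ 2) := by
    rw [← sq_abs x]; nlinarith [sq_nonneg (|x| - 1)]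
  have := mul_le_mul_of_nonneg_left h2 (mul_nonneg hA0 hB0)
  nlinarith

lemma int_sq (ω0 v0 vq r : ℝ) (hr : 0 < r) (hvq : 0 < vq) (hv0 : 0 < v0) (s : ℝ)
    (hs : s ∈ Set.Icc (ω0 - r) (ω0 + r)) (a : ℝ) :
    Integrable (fun ω => (ω - a) ^ 2 * fj ω0 v0 vq r s ω) := by
  refine quad_int ω0 v0 vq r hr hvq hv0 s hs _ (by fun_prop)
    (2 * (1 + |ω0 - a|) * (1 + |ω0 - a|)) fun ω => ?_
  rw [sq]
  exact prod_bd (ω - ω0) (1 + |ω0 - a|) (1 + |ω0 - a|) _ _ (by positivity) (lin_bd' ω0 ω a) (lin_bd' ω0 ω a) (by positivity)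

lemma int_lin (ω0 v0 vq r : ℝ) (hr : 0 < r) (hvq : 0 < vq) (hv0 : 0 < v0) (s : ℝ)
    (hs : s ∈ Set.Icc (ω0 - r) (ω0 + r)) (a : ℝ) :
    Integrable (fun ω => (ω - a) * fj ω0 v0 vq r s ω) :=
  quad_int ω0 v0 vq r hr hvq hv0 s hs _ (by fun_prop) _ fun ω => lin_bd ω0 ω a

lemma int_one (ω0 v0 vq r : ℝ) (hr : 0 < r) (hvq : 0 < vq) (hv0 : 0 < v0) (s : ℝ)
    (hs : s ∈ Set.Icc (ω0 - r) (ω0 + r)) :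
    Integrable (fun ω => fj ω0 v0 vq r s ω) := by
  have := quad_int ω0 v0 vq r hr hvq hv0 s hs (fun _ => 1) (by fun_prop) 1 fun ω => by
    rw [abs_one]; nlinarith [sq_nonneg (ω - ω0)]
  simpa using this

lemma N_pos (ω0 v0 vq r : ℝ) (hr : 0 < r) (hvq : 0 < vq) (hv0 : 0 < v0) (s : ℝ)
    (hs : s ∈ Set.Icc (ω0 - r) (ω0 + r)) : 0 < ∫ ω, fj ω0 v0 vq r s ω := by
  rw [integral_pos_iff_support_of_nonneg (fun ω => (fj_pos _ _ _ _ _ _ hr hvq hv0).le)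
    (int_one _ _ _ _ hr hvq hv0 s hs)]
  have : Function.support (fun ω => fj ω0 v0 vq r s ω) = Set.univ :=
    Set.eq_univ_of_forall fun ω => (fj_pos _ _ _ _ _ _ hr hvq hv0).ne'
  rw [this]; simp

lemma centered (ω0 v0 vq r : ℝ) (hr : 0 < r) (hvq : 0 < vq) (hv0 : 0 < v0) (s : ℝ)
    (hs : s ∈ Set.Icc (ω0 - r) (ω0 + r)) :
    ∫ ω, (ω - aCens ω0 v0 vq r s) * fj ω0 v0 vq r s ω = 0 := by
  have hN := N_pos ω0 v0 vq r hr hvq hv0 s hs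
  have h0 := int_lin ω0 v0 vq r hr hvq hv0 s hs 0
  simp only [sub_zero] at h0
  have h1 := int_one ω0 v0 vq r hr hvq hv0 s hs
  have ha : aCens ω0 v0 vq r s = (∫ ω, ω * fj ω0 v0 vq r s ω) / ∫ ω, fj ω0 v0 vq r s ω := rfl
  simp only [sub_mul]
  rw [integral_sub h0 (h1.const_mul _), integral_const_mul, ha]
  field_simp
  ring

/-- The posterior variance under censoring is at least the uncensored posterior variance. -/
lemma var_ge (ω0 v0 vq r : ℝ) (hr : 0 < r) (hvq : 0 < vq) (hv0 : 0 < v0) (s : ℝ)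
    (hs : s ∈ Set.Icc (ω0 - r) (ω0 + r)) :
    v0 * vq / (v0 + vq) * (∫ ω, fj ω0 v0 vq r s ω) ≤
      ∫ ω, (ω - aCens ω0 v0 vq r s) ^ 2 * fj ω0 v0 vq r s ω := by
  have hcent := centered ω0 v0 vq r hr hvq hv0 s hs
  generalize aCens ω0 v0 vq r s = a at *
  have i0 := int_one ω0 v0 vq r hr hvq hv0 s hs
  have i1 := int_lin ω0 v0 vq r hr hvq hv0 s hs a
  have i2 := int_sq ω0 v0 vq r hr hvq hv0 s hs a
  have i3 : Integrable (fun ω => ((ω - a) * kf ω0 vq r ω) * fj ω0 v0 vq r s ω) := by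
    have := kf_cont ω0 vq r hr hvq
    refine quad_int ω0 v0 vq r hr hvq hv0 s hs _ (by fun_prop)
      (2 * (1 + |ω0 - a|) * ((1 + r) / vq)) fun ω => ?_
    refine prod_bd (ω - ω0) _ ((1 + r) / vq) _ _ (by positivity) (lin_bd' ω0 ω a) ?_ (by positivity)
    refine (kf_abs ω0 vq r ω hr hvq).trans ?_
    rw [div_mul_eq_mul_div]
    refine div_le_div_of_nonneg_right ?_ hvq.le
    nlinarith [abs_nonneg (ω - ω0), mul_nonneg hr.le (abs_nonneg (ω - ω0))]
  set β : ℝ := (v0 + vq) / (v0 * vq) with hβ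
  set c : ℝ := (s - a) / vq - (a - ω0) / v0 with hc
  have key : ∫ ω, (fj ω0 v0 vq r s ω - β * ((ω - a) ^ 2 * fj ω0 v0 vq r s ω)
      + c * ((ω - a) * fj ω0 v0 vq r s ω) + ((ω - a) * kf ω0 vq r ω) * fj ω0 v0 vq r s ω) = 0 := by
    refine integral_eq_zero_of_hasDerivAt_of_integrable
      (f := fun ω => (ω - a) * fj ω0 v0 vq r s ω) (fun ω => ?_)
      (((i0.sub (i2.const_mul β)).add (i1.const_mul c)).add i3) i1
    refine (((hasDerivAt_id ω).sub_const a).mul (fj_hasDeriv ω0 v0 vq r s ω hr hvq hv0)).congr_deriv ?_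
    simp only [id]
    rw [hβ, hc]
    field_simp
    ring
  have key2 : ∫ ω, (fj ω0 v0 vq r s ω - β * ((ω - a) ^ 2 * fj ω0 v0 vq r s ω)
      + (c + kf ω0 vq r a) * ((ω - a) * fj ω0 v0 vq r s ω)) ≤ 0 := by
    rw [← key]
    refine integral_mono ((i0.sub (i2.const_mul β)).add (i1.const_mul _))
      (((i0.sub (i2.const_mul β)).add (i1.const_mul c)).add i3) fun ω => ?_
    have hm : 0 ≤ (ω - a) * (kf ω0 vq r ω - kf ω0 vq r a) := by
      rcases le_total a ω with h | h
      · exact mul_nonneg (by linarith) (sub_nonneg.2 (kf_mono ω0 vq r hr hvq h))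
      · exact mul_nonneg_of_nonpos_of_nonpos (by linarith)
          (sub_nonpos.2 (kf_mono ω0 vq r hr hvq h))
    have := mul_nonneg hm (fj_pos ω0 v0 vq r s ω hr hvq hv0).le
    simp only
    nlinarith
  have e : ∫ ω, (fj ω0 v0 vq r s ω - β * ((ω - a) ^ 2 * fj ω0 v0 vq r s ω)
      + (c + kf ω0 vq r a) * ((ω - a) * fj ω0 v0 vq r s ω)) =
      (∫ ω, fj ω0 v0 vq r s ω) - β * (∫ ω, (ω - a) ^ 2 * fj ω0 v0 vq r s ω)
       + (c + kf ω0 vq r a) * ∫ ω, (ω - a) * fj ω0 v0 vq r s ω := by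
    have h1 := integral_sub i0 (i2.const_mul β)
    have h2 := integral_add (i0.sub (i2.const_mul β)) (i1.const_mul (c + kf ω0 vq r a))
    rw [integral_const_mul] at h1 h2
    simp only [Pi.sub_apply] at h2
    rw [h1] at h2
    exact h2
  rw [e, hcent, mul_zero, add_zero] at key2
  rw [div_mul_eq_mul_div, div_le_iff₀ (by positivity)]
  rw [hβ, sub_nonpos, div_mul_eq_mul_div, le_div_iff₀ (by positivity)] at key2
  linarith

lemma var_le (ω0 v0 vq r : ℝ) (hr : 0 < r) (hvq : 0 < vq) (hv0 : 0 < v0) (s : ℝ)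
    (hs : s ∈ Set.Icc (ω0 - r) (ω0 + r)) :
    ∫ ω, (ω - aCens ω0 v0 vq r s) ^ 2 * fj ω0 v0 vq r s ω ≤
      ∫ ω, (ω - ω0) ^ 2 * fj ω0 v0 vq r s ω := by
  have hcent := centered ω0 v0 vq r hr hvq hv0 s hs
  generalize aCens ω0 v0 vq r s = a at *
  have i1 := int_lin ω0 v0 vq r hr hvq hv0 s hs a
  have i2 := int_sq ω0 v0 vq r hr hvq hv0 s hs a
  have i4 := int_sq ω0 v0 vq r hr hvq hv0 s hs ω0
  have h : ∫ ω, ((ω - a) ^ 2 * fj ω0 v0 vq r s ω + 2 * (a - ω0) * ((ω - a) * fj ω0 v0 vq r s ω))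
      ≤ ∫ ω, (ω - ω0) ^ 2 * fj ω0 v0 vq r s ω := by
    refine integral_mono (i2.add (i1.const_mul _)) i4 fun ω => ?_
    have := mul_nonneg (sq_nonneg (a - ω0)) (fj_pos ω0 v0 vq r s ω hr hvq hv0).le
    simp only
    nlinarith
  rw [integral_add i2 (i1.const_mul _), integral_const_mul, hcent] at h
  linarith

lemma aCens_meas (ω0 v0 vq r : ℝ) (hr : 0 < r) (hvq : 0 < vq) :
    Measurable (aCens ω0 v0 vq r) := by
  have hf := fj_cont2 ω0 v0 vq r hr hvq
  have h1 : StronglyMeasurable (fun s => ∫ ω, ω * fj ω0 v0 vq r s ω) :=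
    StronglyMeasurable.integral_prod_left' (f := fun z : ℝ × ℝ => z.1 * fj ω0 v0 vq r z.2 z.1)
      (by fun_prop : Continuous fun z : ℝ × ℝ => z.1 * fj ω0 v0 vq r z.2 z.1).stronglyMeasurable
  have h2 : StronglyMeasurable (fun s => ∫ ω, fj ω0 v0 vq r s ω) :=
    StronglyMeasurable.integral_prod_left' (f := fun z : ℝ × ℝ => fj ω0 v0 vq r z.2 z.1)
      hf.stronglyMeasurable
  exact h1.measurable.div h2.measurable

/-- Uniform bound on quadratic moments. -/
lemma M_bd (ω0 v0 vq r : ℝ) (hr : 0 < r) (hvq : 0 < vq) (hv0 : 0 < v0) :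
    ∃ B : ℝ, ∀ s ∈ Set.Icc (ω0 - r) (ω0 + r),
      ∫ ω, (1 + (ω - ω0) ^ 2) * fj ω0 v0 vq r s ω ≤ B := by
  obtain ⟨C, hC, hb⟩ := fj_bound ω0 v0 vq r hr hvq hv0
  refine ⟨∫ ω, C * ((1 + (ω - ω0) ^ 2) * exp (-(4 * v0)⁻¹ * (ω - ω0) ^ 2)), fun s hs => ?_⟩
  refine integral_mono ?_ ((base_int ω0 v0 hv0).const_mul C) fun ω => ?_
  · refine quad_int ω0 v0 vq r hr hvq hv0 s hs _ (by fun_prop) 1 fun ω => ?_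
    rw [abs_of_pos (by positivity), one_mul]
  · have := mul_le_mul_of_nonneg_left (hb s hs ω) (by positivity : 0 ≤ 1 + (ω - ω0) ^ 2)
    simp only
    linarith

/-- Product integrability from a uniform bound. -/
lemma prod_int (l u : ℝ) (F : ℝ × ℝ → ℝ) (hm : Measurable F) (h0 : ∀ z, 0 ≤ F z) (B : ℝ)
    (hi : ∀ s ∈ Set.Icc l u, Integrable (fun ω => F (ω, s)))
    (hB : ∀ s ∈ Set.Icc l u, ∫ ω, F (ω, s) ≤ B) :
    Integrable F (volume.prod (volume.restrict (Set.Icc l u))) := by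
  rw [integrable_prod_iff' hm.aestronglyMeasurable]
  refine ⟨(ae_restrict_iff' measurableSet_Icc).2 (Eventually.of_forall hi), ?_⟩
  have e : (fun s => ∫ ω, ‖F (ω, s)‖) = fun s => ∫ ω, F (ω, s) := by
    funext s; congr 1; funext ω; rw [Real.norm_eq_abs, abs_of_nonneg (h0 _)]
  rw [e]
  refine (integrable_const B).mono'
    (StronglyMeasurable.integral_prod_left' hm.stronglyMeasurable).aestronglyMeasurable ?_
  refine (ae_restrict_iff' measurableSet_Icc).2 (Eventually.of_forall fun s hs => ?_)
  rw [Real.norm_eq_abs, abs_of_nonneg (integral_nonneg fun ω => h0 _)]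
  exact hB s hs

lemma gauss_integral (m v : ℝ) (hv : 0 < v) : ∫ x, gauss x m v = 1 := by
  have := ProbabilityTheory.integral_gaussianPDFReal_eq_one m (v := ⟨v, hv.le⟩)
    (by intro h; exact hv.ne' (congrArg NNReal.toReal h))
  exact this

/-- Proposition 5 (`prop:actionlin`, single-quality case): with a single source quality, no
finite censoring radius does strictly better than uncensored sampling, whose expected loss
is the posterior variance `σ0²σq²/(σ0²+σq²)`. -/
theorem stmt_6 (ω0 v0 vq : ℝ) (hv0 : 0 < v0) (hvq : 0 < vq) :
    ∀ r : ℝ, 0 < r → v0 * vq / (v0 + vq) ≤ lossCens ω0 v0 vq r := by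
  intro r hr
  have hf := (fj_cont2 ω0 v0 vq r hr hvq).measurable
  have ha := aCens_meas ω0 v0 vq r hr hvq
  have hfp := fun s ω => fj_pos ω0 v0 vq r s ω hr hvq hv0
  obtain ⟨B, hB⟩ := M_bd ω0 v0 vq r hr hvq hv0
  have iq : ∀ s ∈ Set.Icc (ω0 - r) (ω0 + r),
      Integrable (fun ω => (1 + (ω - ω0) ^ 2) * fj ω0 v0 vq r s ω) := fun s hs => by
    refine quad_int ω0 v0 vq r hr hvq hv0 s hs _ (by fun_prop) 1 fun ω => ?_
    rw [abs_of_pos (by positivity), one_mul]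
  have I1 : Integrable (fun z : ℝ × ℝ => fj ω0 v0 vq r z.2 z.1)
      (volume.prod (volume.restrict (Set.Icc (ω0 - r) (ω0 + r)))) := by
    refine prod_int _ _ _ hf (fun z => (hfp _ _).le) B
      (fun s hs => int_one ω0 v0 vq r hr hvq hv0 s hs) fun s hs => (le_trans ?_ (hB s hs))
    refine integral_mono (int_one ω0 v0 vq r hr hvq hv0 s hs) (iq s hs) fun ω => ?_
    simp only
    nlinarith [mul_nonneg (sq_nonneg (ω - ω0)) (hfp s ω).le]
  have I2 : Integrable (fun z : ℝ × ℝ => (z.1 - aCens ω0 v0 vq r z.2) ^ 2 * fj ω0 v0 vq r z.2 z.1)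
      (volume.prod (volume.restrict (Set.Icc (ω0 - r) (ω0 + r)))) := by
    have hm : Measurable (fun z : ℝ × ℝ =>
        (z.1 - aCens ω0 v0 vq r z.2) ^ 2 * fj ω0 v0 vq r z.2 z.1) :=
      ((measurable_fst.sub (ha.comp measurable_snd)).pow_const 2).mul hf
    refine prod_int _ _ _ hm
      (fun z => mul_nonneg (sq_nonneg _) (hfp _ _).le) B
      (fun s hs => int_sq ω0 v0 vq r hr hvq hv0 s hs (aCens ω0 v0 vq r s)) ?_
    intro s hs
    refine le_trans ?_ (hB s hs)
    refine (var_le ω0 v0 vq r hr hvq hv0 s hs).trans ?_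
    refine integral_mono (int_sq ω0 v0 vq r hr hvq hv0 s hs _) (iq s hs) fun ω => ?_
    have h1 := (hfp s ω).le
    exact mul_le_mul_of_nonneg_right (by linarith) h1
  have eL : lossCens ω0 v0 vq r = ∫ ω, ∫ s in Set.Icc (ω0 - r) (ω0 + r),
      (ω - aCens ω0 v0 vq r s) ^ 2 * fj ω0 v0 vq r s ω := by
    unfold lossCens
    congr 1; funext ω
    rw [← integral_mul_const]
    congr 1; funext s
    unfold fj; ring
  have e1 : ∫ ω, ∫ s in Set.Icc (ω0 - r) (ω0 + r), fj ω0 v0 vq r s ω = 1 := by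
    rw [← gauss_integral ω0 v0 hv0]
    congr 1; funext ω
    have : ∀ s, fj ω0 v0 vq r s ω = gauss s ω vq * (gauss ω ω0 v0 / winProb ω0 vq r ω) := by
      intro s; unfold fj; ring
    simp only [this]
    rw [integral_mul_const]
    change winProb ω0 vq r ω * _ = _
    have := (winProb_pos ω0 vq r ω hr hvq).ne'
    field_simp
  rw [integral_integral_swap I1] at e1
  rw [eL, integral_integral_swap I2]
  calc v0 * vq / (v0 + vq) = v0 * vq / (v0 + vq) *
        ∫ s in Set.Icc (ω0 - r) (ω0 + r), ∫ ω, fj ω0 v0 vq r s ω := by rw [e1, mul_one]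
    _ = ∫ s in Set.Icc (ω0 - r) (ω0 + r), v0 * vq / (v0 + vq) * ∫ ω, fj ω0 v0 vq r s ω := by
        rw [integral_const_mul]
    _ ≤ _ := setIntegral_mono_on (I1.integral_prod_right.const_mul _) I2.integral_prod_right
        measurableSet_Icc fun s hs => var_ge ω0 v0 vq r hr hvq hv0 s hs
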